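/- arXiv:2208.03253 — 2 statements merged into one kernel-verified Lean document; each statement's English description precedes it below -/
import Mathlib

section
/- Let $p > 1$, $r_0 \ge 0$, $c_p \ge 0$, let $(\kappa_s)_{s>1}$ be a family of constants $\kappa_s \ge 0$, and let $1 \le p' < p$ and $r > 1$. Then there exists a constant $c \ge 0$, depending only on $p'$, $r_0$, $p$, $c_p$, $(\kappa_s)_{s>1}$ and $r$, such that the following holds. Let $(\Omega, \mathcal F, \mathbb P)$ be a probability space; for each $n \ge 1$ let $A_n, A'_n, B_n, B'_n : \Omega \to \mathbb R$ be random variables and let $\Omega_n \in \mathcal F$ be an event such that $(A_n(\omega), B_n(\omega)) = (A'_n(\omega), B'_n(\omega))$ for every $\omega \in \Omega_n$. Assume that (i) $\mathbb P(\Omega_n^c) \le \kappa_s n^{-s}$ for all $s > 1$ and all $n \ge 1$; and (ii) $\|A_n\|_{L^p} + \|A'_n\|_{L^p} \le c_p n^{r_0}$ for all $n \ge 1$ (in particular $A_n, A'_n \in L^p(\mathbb P)$). Then for all $n \ge 1$, $$\big\| \mathbb E[A_n \mid \sigma(B_n)] - \mathbb E[A'_n \mid \sigma(B'_n)] \big\|_{L^{p'}}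 \le c\, n^{-r}.$$ Here $\mathbb E[A \mid \sigma(B)]$ is the conditional expectation of $A$ given the $\sigma$-algebra generated by $B$, and $\|\cdot\|_{L^q}$ is the $L^q(\mathbb P)$-norm. -/
open MeasureTheory

open scoped ENNReal

section CondExpPerturbation

variable {Ω : Type*} {m m₀ : MeasurableSpace Ω} {μ : Measure Ω} {E : Set Ω}

/-- Hölder's inequality for the restriction of a function to a set. -/
theorem eLpNorm_indicator_le_eLpNorm_mul_rpow_measure {P T Q : ℝ≥0∞} [ENNReal.HolderTriple P T Q]
    (hE : MeasurableSet E) {f : Ω → ℝ} (hf : AEStronglyMeasurable f μ)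
    (hT : T ≠ 0) (hT' : T ≠ ∞) :
    eLpNorm (E.indicator f) Q μ ≤ eLpNorm f P μ * μ E ^ (1 / T.toReal) := by
  have h := eLpNorm_smul_le_mul_eLpNorm (p := P) (q := T) (r := Q) (μ := μ)
    (f := E.indicator fun _ => (1 : ℝ)) (aestronglyMeasurable_const.indicator hE) hf
  rw [eLpNorm_indicator_const hE hT hT'] at h
  have hfE : f • E.indicator (fun _ => (1 : ℝ)) = E.indicator f := by
    ext ω
    by_cases hω : ω ∈ E <;> simp [hω]
  rw [hfE] at h
  simpa using h

/-- Bayes' formula, in product form: the conditional expectation under the restricted measure,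
multiplied by the conditional probability of the event. -/
theorem condExp_restrict_mul_condExp_indicator [IsFiniteMeasure μ] (hm : m ≤ m₀)
    (hE : MeasurableSet E) {f : Ω → ℝ} (hf : Integrable f μ) :
    (μ.restrict E)[f | m] * μ[E.indicator fun _ => (1 : ℝ) | m] =ᵐ[μ] μ[E.indicator f | m] := by
  set G := (μ.restrict E)[f | m] with hG
  have hGm : StronglyMeasurable[m] G := stronglyMeasurable_condExp
  have hGE : G * E.indicator (fun _ => (1 : ℝ)) = E.indicator G := by
    ext ω
    by_cases hω : ω ∈ E <;> simp [hω]
  have hGi : Integrable (E.indicator G) μ := (integrable_indicator_iff hE).2 integrable_condExp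
  have hpull : μ[E.indicator G | m] =ᵐ[μ] G * μ[E.indicator fun _ => (1 : ℝ) | m] := by
    rw [← hGE]
    exact condExp_mul_of_stronglyMeasurable_left hGm (hGE ▸ hGi)
      ((integrable_const _).indicator hE)
  refine hpull.symm.trans ?_
  refine ae_eq_condExp_of_forall_setIntegral_eq hm (hf.indicator hE)
    (fun s _ _ => integrable_condExp.integrableOn) (fun s hs _ => ?_)
    stronglyMeasurable_condExp.aestronglyMeasurable
  have key : ∀ g : Ω → ℝ, ∫ x in s, E.indicator g x ∂μ = ∫ x in s, g x ∂(μ.restrict E) := by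
    intro g
    rw [integral_indicator hE, Measure.restrict_restrict hE, Measure.restrict_restrict (hm s hs),
      Set.inter_comm]
  rw [setIntegral_condExp hm hGi hs, key, key, hG, setIntegral_condExp hm hf.restrict hs]

/-- Conditional expectation under `μ` is close in norm to conditional expectation under the
restriction of `μ` to an event whose complement is small. -/
theorem eLpNorm_condExp_sub_indicator_condExp_restrict_le [IsFiniteMeasure μ] {P T Q : ℝ≥0∞}
    [ENNReal.HolderTriple P T Q] (hm : m ≤ m₀) (hE : MeasurableSet E) {f : Ω → ℝ}
    (hf : MemLp f P μ) (hQ : 1 ≤ Q) (hP : 1 ≤ P) (hT : 1 ≤ T) (hT' : T ≠ ∞) :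
    eLpNorm (μ[f | m] - E.indicator ((μ.restrict E)[f | m])) Q μ
      ≤ 3 * (eLpNorm f P μ * μ Eᶜ ^ (1 / T.toReal)) := by
  set G := (μ.restrict E)[f | m] with hG
  set q := μ[Eᶜ.indicator fun _ => (1 : ℝ) | m]
  have hfi : Integrable f μ := hf.integrable hP
  have hT0 : T ≠ 0 := (zero_lt_one.trans_le hT).ne'
  have hdecomp : μ[f | m] - E.indicator G =ᵐ[μ]
      Eᶜ.indicator (μ[f | m]) + E.indicator (μ[Eᶜ.indicator f | m]) - E.indicator G • q := by
    have h₁ : μ[f | m] =ᵐ[μ] μ[E.indicator f | m] + μ[Eᶜ.indicator f | m] := by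
      conv_lhs => rw [← Set.indicator_self_add_compl E f]
      exact condExp_add (hfi.indicator hE) (hfi.indicator hE.compl) m
    have h₂ : (fun _ => (1 : ℝ)) =ᵐ[μ] μ[E.indicator fun _ => (1 : ℝ) | m] + q := by
      have := condExp_add ((integrable_const (1 : ℝ)).indicator (μ := μ) hE)
        ((integrable_const (1 : ℝ)).indicator hE.compl) m
      rwa [Set.indicator_self_add_compl, condExp_const hm] at this
    filter_upwards [h₁, h₂, condExp_restrict_mul_condExp_indicator hm hE hfi] with ω h₁ h₂ h₃
    by_cases hω : ω ∈ E
    · simp only [Pi.add_apply, Pi.mul_apply] at h₁ h₂ h₃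
      simp only [Pi.sub_apply, Pi.add_apply, smul_eq_mul, Pi.mul_apply, Set.indicator_of_mem hω,
        Set.indicator_of_notMem (Set.notMem_compl_iff.2 hω), hG]
      rw [h₁, ← h₃]
      linear_combination ((μ.restrict E)[f | m] ω) * (-h₂)
    · simp [hω]
  have hcm : AEStronglyMeasurable (μ[f | m]) μ := integrable_condExp.aestronglyMeasurable
  have hcm' : AEStronglyMeasurable (μ[Eᶜ.indicator f | m]) μ :=
    integrable_condExp.aestronglyMeasurable
  have hGm : AEStronglyMeasurable (E.indicator G) μ :=
    (stronglyMeasurable_condExp.mono hm).aestronglyMeasurable.indicator hE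
  have hqm : AEStronglyMeasurable q μ := integrable_condExp.aestronglyMeasurable
  have b₁ : eLpNorm (Eᶜ.indicator (μ[f | m])) Q μ ≤ eLpNorm f P μ * μ Eᶜ ^ (1 / T.toReal) := by
    refine (eLpNorm_indicator_le_eLpNorm_mul_rpow_measure (P := P) (T := T) hE.compl hcm
      hT0 hT').trans ?_
    gcongr
    exact eLpNorm_condExp_le_eLpNorm f hP
  have b₂ : eLpNorm (E.indicator (μ[Eᶜ.indicator f | m])) Q μ
      ≤ eLpNorm f P μ * μ Eᶜ ^ (1 / T.toReal) :=
    (eLpNorm_indicator_le _).trans <| (eLpNorm_condExp_le_eLpNorm _ hQ).trans <|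
      eLpNorm_indicator_le_eLpNorm_mul_rpow_measure hE.compl hf.1 hT0 hT'
  have b₃ : eLpNorm (E.indicator G • q) Q μ ≤ eLpNorm f P μ * μ Eᶜ ^ (1 / T.toReal) := by
    refine (eLpNorm_smul_le_mul_eLpNorm (p := P) (q := T) hqm hGm).trans ?_
    gcongr
    · rw [eLpNorm_indicator_eq_eLpNorm_restrict hE]
      exact (eLpNorm_condExp_le_eLpNorm f hP).trans
        (eLpNorm_mono_measure f Measure.restrict_le_self)
    · refine (eLpNorm_condExp_le_eLpNorm _ hT).trans ?_
      rw [eLpNorm_indicator_const hE.compl hT0 hT']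
      simp
  calc eLpNorm (μ[f | m] - E.indicator G) Q μ
      = eLpNorm (Eᶜ.indicator (μ[f | m]) + E.indicator (μ[Eᶜ.indicator f | m])
          - E.indicator G • q) Q μ := eLpNorm_congr_ae hdecomp
    _ ≤ eLpNorm (Eᶜ.indicator (μ[f | m])) Q μ + eLpNorm (E.indicator (μ[Eᶜ.indicator f | m])) Q μ
          + eLpNorm (E.indicator G • q) Q μ := by
        refine (eLpNorm_sub_le ((hcm.indicator hE.compl).add (hcm'.indicator hE))
          (hGm.smul hqm) hQ).trans ?_
        gcongr
        exact eLpNorm_add_le (hcm.indicator hE.compl) (hcm'.indicator hE) hQ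
    _ ≤ 3 * (eLpNorm f P μ * μ Eᶜ ^ (1 / T.toReal)) := by
        refine (add_le_add (add_le_add b₁ b₂) b₃).trans_eq ?_
        ring

/-- Conditional expectations given almost everywhere equal random variables agree. -/
theorem condExp_comap_congr_ae [IsFiniteMeasure μ] {f f' B B' : Ω → ℝ}
    (hf : Integrable f μ) (hB : Measurable B) (hB' : Measurable B')
    (hff' : f =ᵐ[μ] f') (hBB' : B =ᵐ[μ] B') :
    μ[f | MeasurableSpace.comap B Real.measurableSpace] =ᵐ[μ]
      μ[f' | MeasurableSpace.comap B' Real.measurableSpace] := by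
  refine ae_eq_condExp_of_forall_setIntegral_eq hB'.comap_le (hf.congr hff')
    (fun s _ _ => integrable_condExp.integrableOn) ?_ ?_
  · rintro _ ⟨t, ht, rfl⟩ -
    have hpre : (B' ⁻¹' t : Set Ω) =ᵐ[μ] (B ⁻¹' t : Set Ω) := by
      filter_upwards [hBB'] with ω hω
      change (B' ω ∈ t) = (B ω ∈ t)
      rw [hω]
    rw [setIntegral_congr_set hpre, setIntegral_congr_set hpre,
      setIntegral_condExp hB.comap_le hf ⟨t, ht, rfl⟩]
    exact integral_congr_ae (ae_restrict_of_ae hff')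
  · have hsm : StronglyMeasurable[MeasurableSpace.comap B Real.measurableSpace]
        (μ[f | MeasurableSpace.comap B Real.measurableSpace]) := stronglyMeasurable_condExp
    obtain ⟨g, hg, hgB⟩ := hsm.measurable.exists_eq_measurable_comp
    refine ⟨g ∘ B', (hg.comp (comap_measurable B')).stronglyMeasurable, ?_⟩
    rw [hgB]
    filter_upwards [hBB'] with ω hω
    simp [hω]

/-- Stability of the conditional expectation `μ[f | σ(B)]` under a modification of `(f, B)`
outside an event. -/
theorem eLpNorm_condExp_comap_sub_condExp_comap_le [IsFiniteMeasure μ] {P T Q : ℝ≥0∞}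
    [ENNReal.HolderTriple P T Q] (hE : MeasurableSet E) {f f' B B' : Ω → ℝ}
    (hf : MemLp f P μ) (hf' : MemLp f' P μ) (hB : Measurable B) (hB' : Measurable B')
    (hff' : Set.EqOn f f' E) (hBB' : Set.EqOn B B' E)
    (hQ : 1 ≤ Q) (hP : 1 ≤ P) (hT : 1 ≤ T) (hT' : T ≠ ∞) :
    eLpNorm (μ[f | MeasurableSpace.comap B Real.measurableSpace]
        - μ[f' | MeasurableSpace.comap B' Real.measurableSpace]) Q μ
      ≤ 3 * ((eLpNorm f P μ + eLpNorm f' P μ) * μ Eᶜ ^ (1 / T.toReal)) := by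
  set u := μ[f | MeasurableSpace.comap B Real.measurableSpace]
  set u' := μ[f' | MeasurableSpace.comap B' Real.measurableSpace]
  set v := E.indicator ((μ.restrict E)[f | MeasurableSpace.comap B Real.measurableSpace])
  set v' := E.indicator ((μ.restrict E)[f' | MeasurableSpace.comap B' Real.measurableSpace])
  have hvv' : v =ᵐ[μ] v' := by
    have hrestrict := condExp_comap_congr_ae (hf.integrable hP).restrict hB hB'
      (ae_restrict_of_forall_mem hE hff') (ae_restrict_of_forall_mem hE hBB')
    exact (ae_eq_restrict_iff_indicator_ae_eq hE).1 hrestrict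
  have hvm : AEStronglyMeasurable v μ :=
    (stronglyMeasurable_condExp.mono hB.comap_le).aestronglyMeasurable.indicator hE
  have hvm' : AEStronglyMeasurable v' μ := hvm.congr hvv'
  have hum : AEStronglyMeasurable u μ := integrable_condExp.aestronglyMeasurable
  have hum' : AEStronglyMeasurable u' μ := integrable_condExp.aestronglyMeasurable
  have huu' : u - u' =ᵐ[μ] (u - v) - (u' - v') := by
    filter_upwards [hvv'] with ω hω
    simp only [Pi.sub_apply, hω]
    ring
  calc eLpNorm (u - u') Q μ = eLpNorm ((u - v) - (u' - v')) Q μ := eLpNorm_congr_ae huu'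
    _ ≤ eLpNorm (u - v) Q μ + eLpNorm (u' - v') Q μ :=
        eLpNorm_sub_le (hum.sub hvm) (hum'.sub hvm') hQ
    _ ≤ 3 * (eLpNorm f P μ * μ Eᶜ ^ (1 / T.toReal))
          + 3 * (eLpNorm f' P μ * μ Eᶜ ^ (1 / T.toReal)) :=
        add_le_add
          (eLpNorm_condExp_sub_indicator_condExp_restrict_le hB.comap_le hE hf hQ hP hT hT')
          (eLpNorm_condExp_sub_indicator_condExp_restrict_le hB'.comap_le hE hf' hQ hP hT hT')
    _ = 3 * ((eLpNorm f P μ + eLpNorm f' P μ) * μ Eᶜ ^ (1 / T.toReal)) := by ring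

end CondExpPerturbation

/-- The conjugate exponent `t` with `1 / p + 1 / t = 1 / q`. -/
theorem exists_holderTriple_ofReal {p q : ℝ} (hq : 1 ≤ q) (hqp : q < p) :
    ∃ t : ℝ, 1 ≤ t ∧
      ENNReal.HolderTriple (ENNReal.ofReal p) (ENNReal.ofReal t) (ENNReal.ofReal q) := by
  have hq0 : 0 < q := zero_lt_one.trans_le hq
  have hp0 : 0 < p := hq0.trans hqp
  have hlt : p⁻¹ < q⁻¹ := inv_strictAnti₀ hq0 hqp
  have hd : 0 < q⁻¹ - p⁻¹ := sub_pos.2 hlt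
  refine ⟨(q⁻¹ - p⁻¹)⁻¹, ?_, ⟨?_⟩⟩
  · refine (one_le_inv₀ hd).2 ?_
    have h1 : q⁻¹ ≤ 1 := inv_le_one_of_one_le₀ hq
    have h2 : 0 < p⁻¹ := inv_pos.2 hp0
    linarith
  · rw [← ENNReal.ofReal_inv_of_pos hp0, ← ENNReal.ofReal_inv_of_pos (inv_pos.2 hd),
      ← ENNReal.ofReal_inv_of_pos hq0, inv_inv,
      ← ENNReal.ofReal_add (inv_pos.2 hp0).le hd.le, add_sub_cancel]

theorem stmt0
    (p r₀ cp : ℝ) (hp : 1 < p) (hr₀ : 0 ≤ r₀) (hcp : 0 ≤ cp)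
    (κ : ℝ → ℝ) (hκ : ∀ r : ℝ, 1 < r → 0 ≤ κ r)
    (p' : ℝ) (hp' : 1 ≤ p') (hp'p : p' < p) (r : ℝ) (hr : 1 < r) :
    ∃ c : ℝ, 0 ≤ c ∧
      ∀ {Ω : Type*} [MeasurableSpace Ω] (μ : Measure Ω) [IsProbabilityMeasure μ]
        (A A' B B' : ℕ → Ω → ℝ) (E : ℕ → Set Ω),
        (∀ n : ℕ, 1 ≤ n → Measurable (A n)) →
        (∀ n : ℕ, 1 ≤ n → Measurable (A' n)) →
        (∀ n : ℕ, 1 ≤ n → Measurable (B n)) →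
        (∀ n : ℕ, 1 ≤ n → Measurable (B' n)) →
        (∀ n : ℕ, 1 ≤ n → MeasurableSet (E n)) →
        (∀ n : ℕ, 1 ≤ n → ∀ ω ∈ E n, (A n ω, B n ω) = (A' n ω, B' n ω)) →
        (∀ s : ℝ, 1 < s → ∀ n : ℕ, 1 ≤ n →
          μ (E n)ᶜ ≤ ENNReal.ofReal (κ s * (n : ℝ) ^ (-s))) →
        (∀ n : ℕ, 1 ≤ n →
          eLpNorm (A n) (ENNReal.ofReal p) μ + eLpNorm (A' n) (ENNReal.ofReal p) μ
            ≤ ENNReal.ofReal (cp * (n : ℝ) ^ r₀)) →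
        ∀ n : ℕ, 1 ≤ n →
          eLpNorm
              (μ[A n | MeasurableSpace.comap (B n) Real.measurableSpace]
                - μ[A' n | MeasurableSpace.comap (B' n) Real.measurableSpace])
              (ENNReal.ofReal p') μ
            ≤ ENNReal.ofReal (c * (n : ℝ) ^ (-r)) := by
  obtain ⟨t, ht, hholder⟩ := exists_holderTriple_ofReal hp' hp'p
  have ht0 : 0 < t := zero_lt_one.trans_le ht
  set s : ℝ := max 2 (t * (r + r₀))
  have hs1 : 1 < s := one_lt_two.trans_le (le_max_left _ _)
  have hκs := hκ s hs1
  refine ⟨3 * (cp * κ s ^ (1 / t)), by positivity, ?_⟩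
  intro Ω _ μ _ A A' B B' E hA hA' hB hB' hE hEq hEc hnorm n hn
  have hn1 : (1 : ℝ) ≤ n := by exact_mod_cast hn
  have hn0 : (0 : ℝ) < n := zero_lt_one.trans_le hn1
  have hsum := (hnorm n hn).trans_lt ENNReal.ofReal_lt_top
  have hmA : MemLp (A n) (ENNReal.ofReal p) μ :=
    ⟨(hA n hn).aestronglyMeasurable, (ENNReal.add_lt_top.1 hsum).1⟩
  have hmA' : MemLp (A' n) (ENNReal.ofReal p) μ :=
    ⟨(hA' n hn).aestronglyMeasurable, (ENNReal.add_lt_top.1 hsum).2⟩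
  refine (eLpNorm_condExp_comap_sub_condExp_comap_le (P := ENNReal.ofReal p)
    (T := ENNReal.ofReal t) (hE n hn) hmA hmA' (hB n hn) (hB' n hn)
    (fun ω hω => congrArg Prod.fst (hEq n hn ω hω)) (fun ω hω => congrArg Prod.snd (hEq n hn ω hω))
    (ENNReal.one_le_ofReal.2 hp') (ENNReal.one_le_ofReal.2 hp.le) (ENNReal.one_le_ofReal.2 ht)
    ENNReal.ofReal_ne_top).trans ?_
  rw [ENNReal.toReal_ofReal ht0.le]
  have hexp : r₀ + -s * (1 / t) ≤ -r := by
    have h : r + r₀ ≤ s / t := by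
      rw [le_div_iff₀ ht0, mul_comm]
      exact le_max_right _ _
    have h' : -s * (1 / t) = -(s / t) := by ring
    linarith
  calc 3 * ((eLpNorm (A n) (ENNReal.ofReal p) μ + eLpNorm (A' n) (ENNReal.ofReal p) μ)
          * μ (E n)ᶜ ^ (1 / t))
      ≤ 3 * (ENNReal.ofReal (cp * (n : ℝ) ^ r₀)
          * ENNReal.ofReal (κ s * (n : ℝ) ^ (-s)) ^ (1 / t)) := by
        gcongr
        · exact hnorm n hn
        · exact hEc s hs1 n hn
    _ = ENNReal.ofReal (3 * (cp * κ s ^ (1 / t)) * (n : ℝ) ^ (r₀ + -s * (1 / t))) := by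
        rw [ENNReal.ofReal_rpow_of_nonneg (by positivity) (by positivity),
          ← ENNReal.ofReal_mul (by positivity), ← ENNReal.ofReal_ofNat 3,
          ← ENNReal.ofReal_mul (by norm_num), Real.mul_rpow hκs (by positivity),
          ← Real.rpow_mul hn0.le, Real.rpow_add hn0]
        congr 1
        ring
    _ ≤ ENNReal.ofReal (3 * (cp * κ s ^ (1 / t)) * (n : ℝ) ^ (-r)) := by
        gcongr
end

section
/- Let n ≥ 1. Let π, π̃ be probability densities on ℝ, and let p, q : ℝ × ℝ → [0, ∞) be measurable with ∫_ℝ p(x, y) dy = 1 and ∫_ℝ q(x, y) dy = 1 for every x ∈ ℝ. Define probability densities on ℝ^{n+1} by f(x_0, …, x_n) = π(x_0) ∏_{i=0}^{n−1} p(x_i, x_{i+1}) and g(x_0, …, x_n) = π̃(x_0) ∏_{i=0}^{n−1} q(x_i, x_{i+1}). For x ∈ ℝ, set H²_x(p, q) = ∫_ℝ (√(p(x,y)) − √(q(x,y)))² dy, and let μ_i (resp. ν_i) be the density of the i-th marginal of f (resp. of g). Then ∫_{ℝ^{n+1}} (√f − √g)² ≤ ∫_ℝ (√π − √π̃)² +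 (1/2) Σ_{i=0}^{n−1} [ ∫_ℝ H²_x(p, q) μ_i(x) dx + ∫_ℝ H²_x(p, q) ν_i(x) dx ]. -/
open MeasureTheory

noncomputable section

/-- `f` is a probability density with respect to `volume`
(the last condition forces integrability, since a non-integrable `f` has integral `0`). -/
structure IsProbDensity {α : Type*} [MeasureSpace α] (f : α → ℝ) : Prop where
  measurable : Measurable f
  nonneg : ∀ x, 0 ≤ f x
  integral_eq_one : ∫ x, f x = 1

/-- `f` is a (measurable, nonnegative, real-valued) density of the measure `m` on `ℝ` with
respect to Lebesgue measure. -/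
structure IsDensityOf (m : Measure ℝ) (f : ℝ → ℝ) : Prop where
  measurable : Measurable f
  nonneg : ∀ x, 0 ≤ f x
  eq_withDensity : m = volume.withDensity (fun x => ENNReal.ofReal (f x))

/-- The squared Hellinger distance `∫ (√f - √g)²` with respect to `volume`. -/
def hellingerSq {α : Type*} [MeasureSpace α] (f g : α → ℝ) : ℝ :=
  ∫ x, (√(f x) - √(g x)) ^ 2

/-- The conditional squared Hellinger distance `H²_x(p, q)` given the starting point `x`. -/
def condHellingerSq (p q : ℝ → ℝ → ℝ) (x : ℝ) : ℝ :=
  hellingerSq (p x) (q x)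

/-- The joint density `π(x₀) ∏_{i<n} p(x_i, x_{i+1})` of the first `n + 1` states of the
homogeneous Markov chain with initial density `π` and transition density `p`. -/
def chainDensity (π : ℝ → ℝ) (p : ℝ → ℝ → ℝ) (n : ℕ) (x : Fin (n + 1) → ℝ) : ℝ :=
  π (x 0) * ∏ i : Fin n, p (x i.castSucc) (x i.succ)

/-- The `i`-th marginal law of the measure on `ℝ^{n+1}` with density `f`. -/
def marginalLaw {n : ℕ} (f : (Fin (n + 1) → ℝ) → ℝ) (i : Fin (n + 1)) : Measure ℝ :=
  (volume.withDensity (fun x => ENNReal.ofReal (f x))).map (fun x => x i)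

end

open MeasureTheory

section Density

variable {α : Type*} [MeasureSpace α]

lemma IsProbDensity.integrable {f : α → ℝ} (hf : IsProbDensity f) : Integrable f :=
  integrable_of_integral_eq_one hf.integral_eq_one

lemma IsProbDensity.lintegral_eq_one {f : α → ℝ} (hf : IsProbDensity f) :
    ∫⁻ x, ENNReal.ofReal (f x) = 1 := by
  rw [← ofReal_integral_eq_lintegral_ofReal hf.integrable (.of_forall hf.nonneg),
    hf.integral_eq_one, ENNReal.ofReal_one]

lemma IsProbDensity.of_lintegral_eq_one {f : α → ℝ} (hm : Measurable f) (h0 : ∀ x, 0 ≤ f x)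
    (h : ∫⁻ x, ENNReal.ofReal (f x) = 1) : IsProbDensity f := by
  refine ⟨hm, h0, ?_⟩
  rw [integral_eq_lintegral_of_nonneg_ae (.of_forall h0) hm.aestronglyMeasurable, h,
    ENNReal.toReal_one]

lemma sq_sqrt_sub_sqrt {a b : ℝ} (ha : 0 ≤ a) (hb : 0 ≤ b) :
    (√a - √b) ^ 2 = a + b - 2 * (√a * √b) := by
  rw [sub_sq, Real.sq_sqrt ha, Real.sq_sqrt hb]; ring

lemma sq_sqrt_sub_sqrt_le_add {a b : ℝ} (ha : 0 ≤ a) (hb : 0 ≤ b) :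
    (√a - √b) ^ 2 ≤ a + b := by
  rw [sq_sqrt_sub_sqrt ha hb]
  have := mul_nonneg (Real.sqrt_nonneg a) (Real.sqrt_nonneg b)
  linarith

lemma integrable_sq_sqrt_sub_sqrt {f g : α → ℝ} (hf : IsProbDensity f) (hg : IsProbDensity g) :
    Integrable (fun x => (√(f x) - √(g x)) ^ 2) := by
  have hfm := hf.measurable
  have hgm := hg.measurable
  refine (hf.integrable.add hg.integrable).mono' (by fun_prop) (.of_forall fun x => ?_)
  rw [Real.norm_of_nonneg (sq_nonneg _)]
  exact sq_sqrt_sub_sqrt_le_add (hf.nonneg x) (hg.nonneg x)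

lemma integrable_sqrt_mul_sqrt {f g : α → ℝ} (hf : IsProbDensity f) (hg : IsProbDensity g) :
    Integrable (fun x => √(f x) * √(g x)) := by
  have h := ((hf.integrable.add hg.integrable).sub (integrable_sq_sqrt_sub_sqrt hf hg)).div_const 2
  refine h.congr (.of_forall fun x => ?_)
  simp only [Pi.add_apply, Pi.sub_apply, sq_sqrt_sub_sqrt (hf.nonneg x) (hg.nonneg x)]
  ring

lemma hellingerSq_nonneg (f g : α → ℝ) : 0 ≤ hellingerSq f g :=
  integral_nonneg fun _ => sq_nonneg _

lemma hellingerSq_eq {f g : α → ℝ} (hf : IsProbDensity f) (hg : IsProbDensity g) :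
    hellingerSq f g = 2 - 2 * ∫ x, √(f x) * √(g x) := by
  have h : ∀ x, (√(f x) - √(g x)) ^ 2 = f x + g x - 2 * (√(f x) * √(g x)) := fun x =>
    sq_sqrt_sub_sqrt (hf.nonneg x) (hg.nonneg x)
  simp only [hellingerSq, h]
  rw [integral_sub (hf.integrable.fun_add hg.integrable)
    ((integrable_sqrt_mul_sqrt hf hg).const_mul 2), integral_add hf.integrable hg.integrable,
    integral_const_mul, hf.integral_eq_one, hg.integral_eq_one]
  norm_num

lemma hellingerSq_le_two {f g : α → ℝ} (hf : IsProbDensity f) (hg : IsProbDensity g) :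
    hellingerSq f g ≤ 2 := by
  rw [hellingerSq_eq hf hg]
  have : 0 ≤ ∫ x, √(f x) * √(g x) := integral_nonneg fun x => by positivity
  linarith

/-- Rescaling two probability densities by `a` and `b` changes their squared Hellinger distance
to at most `(√a - √b)²` plus the average of `a` and `b` times the original distance. -/
lemma integral_sq_sqrt_mul_sub_le {f g : α → ℝ} (hf : IsProbDensity f) (hg : IsProbDensity g)
    {a b : ℝ} (ha : 0 ≤ a) (hb : 0 ≤ b) :
    ∫ x, (√(a * f x) - √(b * g x)) ^ 2 ≤
      (√a - √b) ^ 2 + (1 / 2) * (a * hellingerSq f g + b * hellingerSq f g) := by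
  have h : ∀ x, (√(a * f x) - √(b * g x)) ^ 2 =
      a * f x + b * g x - (2 * (√a * √b)) * (√(f x) * √(g x)) := fun x => by
    rw [sq_sqrt_sub_sqrt (mul_nonneg ha (hf.nonneg x)) (mul_nonneg hb (hg.nonneg x)),
      Real.sqrt_mul ha, Real.sqrt_mul hb]
    ring
  have hint : ∫ x, (√(a * f x) - √(b * g x)) ^ 2 =
      a + b - (2 * (√a * √b)) * ∫ x, √(f x) * √(g x) := by
    simp only [h]
    rw [integral_sub ((hf.integrable.const_mul a).fun_add (hg.integrable.const_mul b))
      ((integrable_sqrt_mul_sqrt hf hg).const_mul _),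
      integral_add (hf.integrable.const_mul a) (hg.integrable.const_mul b),
      integral_const_mul, integral_const_mul, integral_const_mul, hf.integral_eq_one,
      hg.integral_eq_one, mul_one, mul_one]
  have hH := hellingerSq_eq hf hg
  have hkey : 0 ≤ (√a - √b) ^ 2 * hellingerSq f g :=
    mul_nonneg (sq_nonneg _) (hellingerSq_nonneg f g)
  rw [sq_sqrt_sub_sqrt ha hb] at hkey ⊢
  rw [hint]
  have hI : ∫ x, √(f x) * √(g x) = 1 - hellingerSq f g / 2 := by linarith
  rw [hI]
  linarith

lemma integral_withDensity_ofReal {f : α → ℝ} (hf : Measurable f) (h0 : ∀ x, 0 ≤ f x)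
    (h : α → ℝ) :
    ∫ x, h x ∂(volume.withDensity fun x => ENNReal.ofReal (f x)) = ∫ x, h x * f x := by
  rw [integral_withDensity_eq_integral_toReal_smul hf.ennreal_ofReal
    (.of_forall fun _ => ENNReal.ofReal_lt_top)]
  simp only [ENNReal.toReal_ofReal (h0 _), smul_eq_mul, mul_comm]

end Density

section Snoc

lemma measurePreserving_snoc (n : ℕ) :
    MeasurePreserving (fun z : (Fin n → ℝ) × ℝ => Fin.snoc (α := fun _ => ℝ) z.1 z.2) := by
  have h := (volume_preserving_piFinSuccAbove (fun _ : Fin (n + 1) => ℝ) (Fin.last n)).symm.comp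
    (Measure.measurePreserving_swap (μ := (volume : Measure (Fin n → ℝ)))
      (ν := (volume : Measure ℝ)))
  rw [← Measure.volume_eq_prod] at h
  convert h using 1
  ext z : 1
  simp [MeasurableEquiv.piFinSuccAbove, Fin.insertNthEquiv, Fin.insertNth_last']

lemma lintegral_snoc {n : ℕ} {F : (Fin (n + 1) → ℝ) → ENNReal} (hF : Measurable F) :
    ∫⁻ z, F z = ∫⁻ x : Fin n → ℝ, ∫⁻ y : ℝ, F (Fin.snoc (α := fun _ => ℝ) x y) := by
  have hs := measurePreserving_snoc n
  rw [← hs.lintegral_comp hF, Measure.volume_eq_prod,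
    lintegral_prod (fun z => F (Fin.snoc (α := fun _ => ℝ) z.1 z.2))
      (hF.comp hs.measurable).aemeasurable]

lemma integrable_comp_snoc {n : ℕ} {F : (Fin (n + 1) → ℝ) → ℝ} (hF : Integrable F) :
    Integrable (fun z : (Fin n → ℝ) × ℝ => F (Fin.snoc (α := fun _ => ℝ) z.1 z.2)) :=
  (measurePreserving_snoc n).integrable_comp_of_integrable hF

lemma integral_snoc {n : ℕ} {F : (Fin (n + 1) → ℝ) → ℝ} (hF : Integrable F) :
    ∫ z, F z = ∫ x : Fin n → ℝ, ∫ y : ℝ, F (Fin.snoc (α := fun _ => ℝ) x y) := by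
  have hs := measurePreserving_snoc n
  have hF' := integrable_comp_snoc hF
  rw [← hs.map_eq, integral_map hs.measurable.aemeasurable
    (by rw [hs.map_eq]; exact hF.aestronglyMeasurable)]
  rw [Measure.volume_eq_prod] at hF' ⊢
  exact integral_prod _ hF'

end Snoc

section Marginal

lemma absolutelyContinuous_marginalLaw {n : ℕ} (f : (Fin (n + 1) → ℝ) → ℝ) (i : Fin (n + 1)) :
    marginalLaw f i ≪ volume :=
  ((withDensity_absolutelyContinuous _ _).map (measurable_pi_apply i)).trans
    (Measure.quasiMeasurePreserving_eval (fun _ : Fin (n + 1) => (volume : Measure ℝ))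
      i).absolutelyContinuous

lemma isFiniteMeasure_marginalLaw {n : ℕ} {f : (Fin (n + 1) → ℝ) → ℝ} (hf : IsProbDensity f)
    (i : Fin (n + 1)) : IsFiniteMeasure (marginalLaw f i) := by
  have : IsFiniteMeasure (volume.withDensity fun x => ENNReal.ofReal (f x)) :=
    isFiniteMeasure_withDensity (by simp [hf.lintegral_eq_one])
  exact Measure.isFiniteMeasure_map _ _

lemma exists_isDensityOf_marginalLaw {n : ℕ} {f : (Fin (n + 1) → ℝ) → ℝ} (hf : IsProbDensity f)
    (i : Fin (n + 1)) : ∃ μ : ℝ → ℝ, IsDensityOf (marginalLaw f i) μ := by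
  have := isFiniteMeasure_marginalLaw hf i
  refine ⟨fun x => ((marginalLaw f i).rnDeriv volume x).toReal,
    (Measure.measurable_rnDeriv _ _).ennreal_toReal, fun x => ENNReal.toReal_nonneg, ?_⟩
  conv_lhs => rw [← Measure.withDensity_rnDeriv_eq _ _ (absolutelyContinuous_marginalLaw f i)]
  refine withDensity_congr_ae ?_
  filter_upwards [Measure.rnDeriv_lt_top (marginalLaw f i) volume] with x hx
  exact (ENNReal.ofReal_toReal hx.ne).symm

lemma integral_marginalLaw {n : ℕ} {f : (Fin (n + 1) → ℝ) → ℝ} (hf : IsProbDensity f)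
    (i : Fin (n + 1)) {h : ℝ → ℝ} (hh : Measurable h) :
    ∫ t, h t ∂(marginalLaw f i) = ∫ x, h (x i) * f x := by
  rw [marginalLaw, integral_map (measurable_pi_apply i).aemeasurable hh.aestronglyMeasurable,
    integral_withDensity_ofReal hf.measurable hf.nonneg]

lemma IsDensityOf.integral_eq {m : Measure ℝ} {μ : ℝ → ℝ} (hμ : IsDensityOf m μ) (h : ℝ → ℝ) :
    ∫ t, h t ∂m = ∫ t, h t * μ t := by
  rw [hμ.eq_withDensity, integral_withDensity_ofReal hμ.measurable hμ.nonneg]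

lemma IsDensityOf.integrable {m : Measure ℝ} [IsFiniteMeasure m] {μ : ℝ → ℝ}
    (hμ : IsDensityOf m μ) : Integrable μ := by
  refine ⟨hμ.measurable.aestronglyMeasurable, ?_⟩
  rw [hasFiniteIntegral_iff_ofReal (.of_forall hμ.nonneg), ← setLIntegral_univ,
    ← withDensity_apply _ MeasurableSet.univ, ← hμ.eq_withDensity]
  exact measure_lt_top m _

end Marginal

section Chain

variable {π π' : ℝ → ℝ} {p q : ℝ → ℝ → ℝ}

lemma measurable_chainDensity (hπ : Measurable π) (hp : Measurable (Function.uncurry p)) (n : ℕ) :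
    Measurable (chainDensity π p n) := by
  refine (hπ.comp (measurable_pi_apply 0)).mul (Finset.measurable_prod _ fun i _ => ?_)
  exact hp.comp (g := Function.uncurry p)
    (f := fun x : Fin (n + 1) → ℝ => (x i.castSucc, x i.succ)) (by fun_prop)

lemma chainDensity_nonneg (hπ : ∀ x, 0 ≤ π x) (hp : ∀ x y, 0 ≤ p x y) (n : ℕ)
    (x : Fin (n + 1) → ℝ) : 0 ≤ chainDensity π p n x :=
  mul_nonneg (hπ _) (Finset.prod_nonneg fun _ _ => hp _ _)

lemma chainDensity_snoc (n : ℕ) (x : Fin (n + 1) → ℝ) (y : ℝ) :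
    chainDensity π p (n + 1) (Fin.snoc (α := fun _ => ℝ) x y) =
      chainDensity π p n x * p (x (Fin.last n)) y := by
  have h0 : Fin.snoc (α := fun _ => ℝ) x y 0 = x 0 :=
    Fin.snoc_castSucc (α := fun _ => ℝ) (i := 0) ..
  simp only [chainDensity, Fin.prod_univ_castSucc, Fin.succ_castSucc, Fin.succ_last,
    Fin.snoc_castSucc, Fin.snoc_last, h0, mul_assoc]

lemma chainDensity_zero (x : Fin 1 → ℝ) : chainDensity π p 0 x = π (x 0) := by
  simp [chainDensity]

lemma map_init_withDensity_chainDensity (hπ : IsProbDensity π)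
    (hpm : Measurable (Function.uncurry p)) (hp : ∀ x, IsProbDensity (p x)) (n : ℕ) :
    (volume.withDensity fun x => ENNReal.ofReal (chainDensity π p (n + 1) x)).map
        (fun x (i : Fin (n + 1)) => x i.castSucc) =
      volume.withDensity fun x => ENNReal.ofReal (chainDensity π p n x) := by
  have hinit : Measurable fun (x : Fin (n + 2) → ℝ) (i : Fin (n + 1)) => x i.castSucc := by
    fun_prop
  have hm := fun k => (measurable_chainDensity hπ.measurable hpm k).ennreal_ofReal
  ext s hs
  rw [Measure.map_apply hinit hs, withDensity_apply _ (hinit hs), withDensity_apply _ hs,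
    ← lintegral_indicator (hinit hs), ← lintegral_indicator hs,
    lintegral_snoc ((hm (n + 1)).indicator (hinit hs))]
  refine lintegral_congr fun x => ?_
  have hx : ∀ y, (fun i : Fin (n + 1) => Fin.snoc (α := fun _ => ℝ) x y i.castSucc) = x :=
    fun y => by ext i; simp
  by_cases hxs : x ∈ s
  · simp only [Set.indicator, Set.mem_preimage, hx, hxs, if_true, chainDensity_snoc,
      ENNReal.ofReal_mul (chainDensity_nonneg hπ.nonneg (fun x => (hp x).nonneg) n x)]
    rw [lintegral_const_mul _ (hp _).measurable.ennreal_ofReal, (hp _).lintegral_eq_one, mul_one]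
  · simp [Set.indicator, hxs]

lemma marginalLaw_chainDensity_succ (hπ : IsProbDensity π)
    (hpm : Measurable (Function.uncurry p)) (hp : ∀ x, IsProbDensity (p x)) (n : ℕ)
    (i : Fin (n + 1)) :
    marginalLaw (chainDensity π p (n + 1)) i.castSucc = marginalLaw (chainDensity π p n) i := by
  rw [marginalLaw, marginalLaw, ← map_init_withDensity_chainDensity hπ hpm hp n,
    Measure.map_map (measurable_pi_apply i) (by fun_prop)]
  rfl

lemma isProbDensity_chainDensity (hπ : IsProbDensity π)
    (hpm : Measurable (Function.uncurry p)) (hp : ∀ x, IsProbDensity (p x)) (n : ℕ) :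
    IsProbDensity (chainDensity π p n) := by
  refine .of_lintegral_eq_one (measurable_chainDensity hπ.measurable hpm n)
    (chainDensity_nonneg hπ.nonneg (fun x => (hp x).nonneg) n) ?_
  induction n with
  | zero =>
    simp only [chainDensity_zero]
    rw [← hπ.lintegral_eq_one]
    exact (volume_preserving_funUnique (Fin 1) ℝ).lintegral_comp hπ.measurable.ennreal_ofReal
  | succ n ih =>
    have h := congrArg (· Set.univ) (map_init_withDensity_chainDensity hπ hpm hp n)
    rw [Measure.map_apply (by fun_prop) .univ] at h
    simpa [ih] using h

lemma measurable_condHellingerSq (hpm : Measurable (Function.uncurry p))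
    (hqm : Measurable (Function.uncurry q)) : Measurable (condHellingerSq p q) := by
  have h : Measurable fun z : ℝ × ℝ => (√(p z.1 z.2) - √(q z.1 z.2)) ^ 2 :=
    (hpm.sqrt.sub hqm.sqrt).pow_const 2
  exact h.stronglyMeasurable.integral_prod_right.measurable

lemma norm_condHellingerSq_le (hp : ∀ x, IsProbDensity (p x)) (hq : ∀ x, IsProbDensity (q x))
    (x : ℝ) : ‖condHellingerSq p q x‖ ≤ 2 := by
  rw [condHellingerSq, Real.norm_of_nonneg (hellingerSq_nonneg _ _)]
  exact hellingerSq_le_two (hp x) (hq x)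

lemma hellingerSq_chainDensity_zero :
    hellingerSq (chainDensity π p 0) (chainDensity π' q 0) = hellingerSq π π' := by
  simp only [hellingerSq, chainDensity_zero]
  exact (volume_preserving_funUnique (Fin 1) ℝ).integral_comp
    (MeasurableEquiv.funUnique (Fin 1) ℝ).measurableEmbedding
    (fun t => (√(π t) - √(π' t)) ^ 2)

lemma hellingerSq_chainDensity_succ_le (hπ : IsProbDensity π) (hπ' : IsProbDensity π')
    (hpm : Measurable (Function.uncurry p)) (hqm : Measurable (Function.uncurry q))
    (hp : ∀ x, IsProbDensity (p x)) (hq : ∀ x, IsProbDensity (q x)) (n : ℕ) :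
    hellingerSq (chainDensity π p (n + 1)) (chainDensity π' q (n + 1)) ≤
      hellingerSq (chainDensity π p n) (chainDensity π' q n) + (1 / 2) *
        ((∫ t, condHellingerSq p q t ∂(marginalLaw (chainDensity π p n) (Fin.last n))) +
          ∫ t, condHellingerSq p q t ∂(marginalLaw (chainDensity π' q n) (Fin.last n))) := by
  have hf := isProbDensity_chainDensity hπ hpm hp
  have hg := isProbDensity_chainDensity hπ' hqm hq
  have hH := measurable_condHellingerSq hpm hqm
  have hHlast : AEStronglyMeasurable fun x : Fin (n + 1) → ℝ =>
      condHellingerSq p q (x (Fin.last n)) :=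
    (hH.comp (measurable_pi_apply _)).aestronglyMeasurable
  have hHf := (hf n).integrable.bdd_mul hHlast
    (.of_forall fun x => norm_condHellingerSq_le hp hq _)
  have hHg := (hg n).integrable.bdd_mul hHlast
    (.of_forall fun x => norm_condHellingerSq_le hp hq _)
  have hD := integrable_sq_sqrt_sub_sqrt (hf (n + 1)) (hg (n + 1))
  have hD' := integrable_comp_snoc hD
  rw [Measure.volume_eq_prod] at hD'
  have hD₀ := integrable_sq_sqrt_sub_sqrt (hf n) (hg n)
  rw [integral_marginalLaw (hf n) _ hH, integral_marginalLaw (hg n) _ hH,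
    ← integral_add hHf hHg, ← integral_const_mul, hellingerSq, hellingerSq,
    ← integral_add hD₀ ((hHf.fun_add hHg).const_mul _), integral_snoc hD]
  refine integral_mono hD'.integral_prod_left (hD₀.add ((hHf.fun_add hHg).const_mul _)) fun x => ?_
  simp only [chainDensity_snoc]
  refine (integral_sq_sqrt_mul_sub_le (hp _) (hq _) ((hf n).nonneg x) ((hg n).nonneg x)).trans_eq ?_
  simp only [condHellingerSq]
  ring

lemma hellingerSq_chainDensity_le (hπ : IsProbDensity π) (hπ' : IsProbDensity π')
    (hpm : Measurable (Function.uncurry p)) (hqm : Measurable (Function.uncurry q))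
    (hp : ∀ x, IsProbDensity (p x)) (hq : ∀ x, IsProbDensity (q x)) (n : ℕ) :
    hellingerSq (chainDensity π p n) (chainDensity π' q n) ≤ hellingerSq π π' +
      (1 / 2) * ∑ i : Fin n,
        ((∫ t, condHellingerSq p q t ∂(marginalLaw (chainDensity π p n) i.castSucc)) +
          ∫ t, condHellingerSq p q t ∂(marginalLaw (chainDensity π' q n) i.castSucc)) := by
  induction n with
  | zero => simp [hellingerSq_chainDensity_zero]
  | succ n ih =>
    have h := hellingerSq_chainDensity_succ_le hπ hπ' hpm hqm hp hq n
    simp only [marginalLaw_chainDensity_succ hπ hpm hp, marginalLaw_chainDensity_succ hπ' hqm hq]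
    rw [Fin.sum_univ_castSucc]
    linarith

end Chain

/-- Tensorization of the squared Hellinger distance for the laws of two homogeneous Markov chains
on `ℝ` with transition densities `p`, `q` and initial densities `π`, `π'`. The conclusion also
records that `f`, `g` are probability densities, that their marginals have densities, and that
all the integrands occurring in the inequality are integrable. -/
theorem stmt7
    (n : ℕ) (hn : 1 ≤ n)
    (π π' : ℝ → ℝ) (hπ : IsProbDensity π) (hπ' : IsProbDensity π')
    (p q : ℝ → ℝ → ℝ)
    (hpm : Measurable (Function.uncurry p)) (hqm : Measurable (Function.uncurry q))
    (hp0 : ∀ x y, 0 ≤ p x y) (hq0 : ∀ x y, 0 ≤ q x y)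
    (hp1 : ∀ x, ∫ y : ℝ, p x y = 1) (hq1 : ∀ x, ∫ y : ℝ, q x y = 1)
    (f g : (Fin (n + 1) → ℝ) → ℝ)
    (hf : f = chainDensity π p n) (hg : g = chainDensity π' q n) :
    IsProbDensity f ∧ IsProbDensity g ∧
    (∀ i : Fin (n + 1), ∃ μ : ℝ → ℝ, IsDensityOf (marginalLaw f i) μ) ∧
    (∀ i : Fin (n + 1), ∃ ν : ℝ → ℝ, IsDensityOf (marginalLaw g i) ν) ∧
    Integrable (fun x => (√(f x) - √(g x)) ^ 2) ∧
    Integrable (fun t => (√(π t) - √(π' t)) ^ 2) ∧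
    (∀ x, Integrable (fun y => (√(p x y) - √(q x y)) ^ 2)) ∧
    ∀ μ ν : Fin n → ℝ → ℝ,
      (∀ i, IsDensityOf (marginalLaw f i.castSucc) (μ i)) →
      (∀ i, IsDensityOf (marginalLaw g i.castSucc) (ν i)) →
      (∀ i, Integrable (fun x => condHellingerSq p q x * μ i x)) ∧
      (∀ i, Integrable (fun x => condHellingerSq p q x * ν i x)) ∧
      hellingerSq f g ≤ hellingerSq π π' +
        (1 / 2) * ∑ i : Fin n,
          ((∫ x, condHellingerSq p q x * μ i x) + ∫ x, condHellingerSq p q x * ν i x) := by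
  subst hf hg
  have hp : ∀ x, IsProbDensity (p x) := fun x => ⟨hpm.of_uncurry_left, hp0 x, hp1 x⟩
  have hq : ∀ x, IsProbDensity (q x) := fun x => ⟨hqm.of_uncurry_left, hq0 x, hq1 x⟩
  have hf := isProbDensity_chainDensity hπ hpm hp n
  have hg := isProbDensity_chainDensity hπ' hqm hq n
  have hH := (measurable_condHellingerSq hpm hqm).aestronglyMeasurable (μ := volume)
  have hbd := norm_condHellingerSq_le hp hq
  refine ⟨hf, hg, exists_isDensityOf_marginalLaw hf, exists_isDensityOf_marginalLaw hg,
    integrable_sq_sqrt_sub_sqrt hf hg, integrable_sq_sqrt_sub_sqrt hπ hπ',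
    fun x => integrable_sq_sqrt_sub_sqrt (hp x) (hq x), fun μ ν hμ hν => ⟨fun i => ?_, fun i => ?_,
    ?_⟩⟩
  · have := isFiniteMeasure_marginalLaw hf i.castSucc
    exact (hμ i).integrable.bdd_mul hH (.of_forall hbd)
  · have := isFiniteMeasure_marginalLaw hg i.castSucc
    exact (hν i).integrable.bdd_mul hH (.of_forall hbd)
  · simpa only [(hμ _).integral_eq, (hν _).integral_eq] using
      hellingerSq_chainDensity_le hπ hπ' hpm hqm hp hq n
end
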